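/- The β-optimal policy has a threshold structure: the set S = {Δ ∈ ℕ : Δ ≥ 1 and λ + β V_β(1) ≤ β V_β(Δ+1)} of states at which the sense action attains the minimum in the Bellman equation V_β(Δ) = U(Δ) + min(λ + β V_β(1), β V_β(Δ+1)) is upward closed: if Δ ∈ S and Δ' ≥ Δ ≥ 1, then Δ' ∈ S. Consequently there exists η ∈ ℕ ∪ {∞} such that sensing attains the Bellman minimum at state Δ if and only if Δ ≥ η. -/

import Mathlib

/-!
Raising the initial age while keeping the same sensing sequence never lowers a later age, so,
`U` being monotone, it never lowers the cost of any sensing sequence. Hence the value function is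
nondecreasing (`valueFn_mono`). The cost `λ + β V(1)` of sensing does not
depend on the current age, whereas the cost `β V(Δ + 1)` of not sensing is nondecreasing in `Δ`, so
the states where sensing is at least as good form an up-set; the threshold is its least element,
or `∞` if it is empty.
-/

open scoped ENNReal

/-- Age-of-information trajectory from initial age `Δ₀` under sensing sequence `δ`. -/
def aoiTraj (Δ₀ : ℕ) (δ : ℕ → Bool) : ℕ → ℕ
  | 0 => Δ₀
  | k + 1 => if δ k then 1 else aoiTraj Δ₀ δ k + 1

/-- β-discounted cost of the sensing sequence `δ` from initial age `Δ₀`,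
valued in `[0,∞]`. -/
noncomputable def discCost (β lam : ℝ) (U : ℕ → ℝ) (Δ₀ : ℕ) (δ : ℕ → Bool) : ℝ≥0∞ :=
  ∑' k : ℕ, ENNReal.ofReal (β ^ k * (U (aoiTraj Δ₀ δ k) + lam * (if δ k then 1 else 0)))

/-- Discounted value function: infimum of the discounted cost over all sensing
sequences. -/
noncomputable def valueFn (β lam : ℝ) (U : ℕ → ℝ) (Δ₀ : ℕ) : ℝ≥0∞ :=
  ⨅ δ : ℕ → Bool, discCost β lam U Δ₀ δ

lemma aoiTraj_mono {a b : ℕ} (hab : a ≤ b) (δ : ℕ → Bool) (k : ℕ) :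
    aoiTraj a δ k ≤ aoiTraj b δ k := by
  induction k with
  | zero => exact hab
  | succ k ih =>
    simp only [aoiTraj]
    split_ifs <;> omega

lemma valueFn_mono {β lam : ℝ} (hβ : 0 ≤ β) {U : ℕ → ℝ} (hU : Monotone U) :
    Monotone (valueFn β lam U) := by
  intro a b hab
  refine iInf_mono fun δ => ENNReal.tsum_le_tsum fun k => ENNReal.ofReal_le_ofReal ?_
  have h := hU (aoiTraj_mono hab δ k)
  gcongr

theorem sense_set_upward_closed_threshold
    (β lam : ℝ) (hβ : β ∈ Set.Ioo (0 : ℝ) 1) (hlam : 0 ≤ lam)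
    (U : ℕ → ℝ) (hU0 : ∀ n, 0 ≤ U n) (hUmono : Monotone U) :
    (∀ Δ Δ' : ℕ, 1 ≤ Δ → Δ ≤ Δ' →
        ENNReal.ofReal lam + ENNReal.ofReal β * valueFn β lam U 1 ≤
          ENNReal.ofReal β * valueFn β lam U (Δ + 1) →
        ENNReal.ofReal lam + ENNReal.ofReal β * valueFn β lam U 1 ≤
          ENNReal.ofReal β * valueFn β lam U (Δ' + 1)) ∧
      ∃ η : ℕ∞, ∀ Δ : ℕ, 1 ≤ Δ →
        ((ENNReal.ofReal lam + ENNReal.ofReal β * valueFn β lam U 1 ≤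
            ENNReal.ofReal β * valueFn β lam U (Δ + 1)) ↔ η ≤ (Δ : ℕ∞)) := by
  have mono : ∀ Δ Δ' : ℕ, 1 ≤ Δ → Δ ≤ Δ' →
      ENNReal.ofReal lam + ENNReal.ofReal β * valueFn β lam U 1 ≤
        ENNReal.ofReal β * valueFn β lam U (Δ + 1) →
      ENNReal.ofReal lam + ENNReal.ofReal β * valueFn β lam U 1 ≤
        ENNReal.ofReal β * valueFn β lam U (Δ' + 1) := by
    intro Δ Δ' _ hle h
    have hV := valueFn_mono (lam := lam) hβ.1.le hUmono (Nat.add_le_add_right hle 1)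
    exact h.trans (by gcongr)
  refine ⟨mono, ?_⟩
  classical
  by_cases hex : ∃ Δ : ℕ, 1 ≤ Δ ∧
      ENNReal.ofReal lam + ENNReal.ofReal β * valueFn β lam U 1 ≤
        ENNReal.ofReal β * valueFn β lam U (Δ + 1)
  · refine ⟨(Nat.find hex : ℕ), fun Δ hΔ => ⟨fun h => ?_, fun h => ?_⟩⟩
    · exact_mod_cast Nat.find_min' hex ⟨hΔ, h⟩
    · obtain ⟨h1, h2⟩ := Nat.find_spec hex
      exact mono _ _ h1 (by exact_mod_cast h) h2
  · refine ⟨⊤, fun Δ hΔ => ⟨fun h => (hex ⟨Δ, hΔ, h⟩).elim, fun h => ?_⟩⟩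
    exact absurd (top_le_iff.mp h) (ENat.natCast_ne_top Δ)
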